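/- Let R = K[x₁,...,xₙ,y₁,...,yₙ] and f_{ij} = x_i y_j − x_j y_i. The ideal (y₁, ..., y_k) is a minimal prime of the ideal I = (y₁, f_{12}, ..., f_{k-1,k}). -/

import Mathlib

open MvPolynomial

/-- The variable `xᵢ` of `R = K[x₁,...,xₙ,y₁,...,yₙ]`. -/
noncomputable def xx {K : Type*} [Field K] {n : ℕ} (i : Fin n) :
    MvPolynomial (Fin n ⊕ Fin n) K := X (Sum.inl i)

/-- The variable `yᵢ` of `R = K[x₁,...,xₙ,y₁,...,yₙ]`. -/
noncomputable def yy {K : Type*} [Field K] {n : ℕ} (i : Fin n) :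
    MvPolynomial (Fin n ⊕ Fin n) K := X (Sum.inr i)

/-- The `2×2` minor `f_{ij} = xᵢyⱼ - xⱼyᵢ` of the generic `2×n` matrix. -/
noncomputable def fm {K : Type*} [Field K] {n : ℕ} (i j : Fin n) :
    MvPolynomial (Fin n ⊕ Fin n) K := xx i * yy j - xx j * yy i

/-!
Modulo a prime `Q` containing `y₁`, the relation `xᵢ yᵢ₊₁ = xᵢ₊₁ yᵢ` carries `yᵢ ∈ Q` to
`yᵢ₊₁ ∈ Q` as long as `xᵢ ∉ Q`. Any `Q` inside `P = (y₁, ..., y_k)` avoids every `xᵢ`, because `P`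
is the kernel of the substitution `y₁ = ⋯ = y_k = 0`, so it must equal `P`.
-/

theorem range_eq_setOf_exists_lt {α : Type*} {k : ℕ} (f : Fin k → α) :
    Set.range f = {a | ∃ i : ℕ, ∃ h : i < k, a = f ⟨i, h⟩} := by
  ext a
  simp only [Set.mem_range, Fin.exists_iff, Set.mem_ofPred_eq, eq_comm]

/-- The `i`-th adjacent `2 × 2` minor of the `2 × (m + 1)` matrix with rows `x` and `y`, namely the
one on columns `i` and `i + 1`; in terms of `fm` it is `f_{i,i+1}`. -/
def adjacentMinor {A : Type*} [CommRing A] {m : ℕ} (x y : Fin (m + 1) → A) (i : Fin m) : A :=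
  x i.castSucc * y i.succ - x i.succ * y i.castSucc

section AdjacentMinors

variable {A : Type*} [CommRing A] {m : ℕ} {x y : Fin (m + 1) → A}

theorem span_adjacentMinor_le_span_range :
    Ideal.span ({y 0} ∪ Set.range (adjacentMinor x y)) ≤ Ideal.span (Set.range y) := by
  have mem (j : Fin (m + 1)) : y j ∈ Ideal.span (Set.range y) := Ideal.subset_span ⟨j, rfl⟩
  rw [Ideal.span_le]
  rintro _ (rfl | ⟨i, rfl⟩)
  · exact mem 0
  · exact Ideal.sub_mem _ (Ideal.mul_mem_left _ _ (mem i.succ))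
      (Ideal.mul_mem_left _ _ (mem i.castSucc))

theorem span_range_le_of_adjacentMinor_mem {Q : Ideal A} [hQ : Q.IsPrime]
    (hx : ∀ i : Fin m, x i.castSucc ∉ Q) (h0 : y 0 ∈ Q) (hminor : ∀ i, adjacentMinor x y i ∈ Q) :
    Ideal.span (Set.range y) ≤ Q := by
  rw [Ideal.span_le, Set.range_subset_iff]
  intro j
  induction j using Fin.induction with
  | zero => exact h0
  | succ i ih =>
    have hxy : x i.castSucc * y i.succ ∈ Q :=
      (Q.sub_mem_iff_left (Q.mul_mem_left _ ih)).mp (hminor i)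
    exact (hQ.mem_or_mem hxy).resolve_left (hx i)

theorem span_range_mem_minimalPrimes (hy : (Ideal.span (Set.range y)).IsPrime)
    (hx : ∀ i : Fin m, x i.castSucc ∉ Ideal.span (Set.range y)) :
    Ideal.span (Set.range y) ∈
      (Ideal.span ({y 0} ∪ Set.range (adjacentMinor x y))).minimalPrimes := by
  refine ⟨⟨hy, span_adjacentMinor_le_span_range⟩, ?_⟩
  rintro Q ⟨hQ, hIQ⟩ hQP
  rw [Ideal.span_le] at hIQ
  exact span_range_le_of_adjacentMinor_mem (fun i hi => hx i (hQP hi)) (hIQ (.inl rfl))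
    fun i => hIQ (.inr ⟨i, rfl⟩)

end AdjacentMinors

section VariableIdeals

variable {R σ τ : Type*}

theorem ker_killCompl [CommSemiring R] {f : σ → τ} (hf : Function.Injective f) :
    RingHom.ker (killCompl hf : MvPolynomial τ R →ₐ[R] MvPolynomial σ R) =
      Ideal.span (X '' (Set.range f)ᶜ) := by
  ext p
  rw [RingHom.mem_ker, mem_ideal_span_X_image]
  constructor
  · intro hp d hd
    by_contra! hd_zero
    have hd_range : ↑d.support ⊆ Set.range f := fun i hi =>
      by_contra fun hif => Finsupp.mem_support_iff.mp hi (hd_zero i hif)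
    refine mem_support_iff.mp hd ?_
    rw [← d.mapDomain_comapDomain f hf hd_range, ← coeff_killCompl hf, hp, coeff_zero]
  · intro hp
    ext d
    rw [coeff_killCompl, coeff_zero]
    by_contra hd
    obtain ⟨i, hif, hi⟩ := hp _ (mem_support_iff.mpr hd)
    exact hi (Finsupp.mapDomain_of_notMem_range d i hif)

theorem isPrime_span_X_image [CommRing R] [IsDomain R] (s : Set σ) :
    (Ideal.span (X '' s : Set (MvPolynomial σ R))).IsPrime := by
  have hker := ker_killCompl (R := R) (Subtype.val_injective (p := (· ∈ sᶜ)))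
  rw [Subtype.range_coe, compl_compl] at hker
  exact hker ▸ RingHom.ker_isPrime _

theorem X_mem_span_X_image_iff [CommSemiring R] [Nontrivial R] {s : Set σ} {i : σ} :
    (X i : MvPolynomial σ R) ∈ Ideal.span (X '' s) ↔ i ∈ s := by
  classical simp [mem_ideal_span_X_image, support_X, Finsupp.single_apply]

end VariableIdeals

theorem span_y_mem_minimalPrimes_general {R σ : Type*} [CommRing R] [IsDomain R] {m : ℕ}
    {u v : Fin (m + 1) → σ} (huv : ∀ i : Fin m, u i.castSucc ∉ Set.range v) :
    Ideal.span (Set.range (X ∘ v : Fin (m + 1) → MvPolynomial σ R)) ∈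
      (Ideal.span ({X (v 0)} ∪ Set.range (adjacentMinor (X ∘ u) (X ∘ v)))).minimalPrimes := by
  have hrange : Set.range (X ∘ v : Fin (m + 1) → MvPolynomial σ R) = X '' Set.range v :=
    Set.range_comp X v
  refine span_range_mem_minimalPrimes (x := X ∘ u) (y := X ∘ v) ?_ fun i => ?_
  · rw [hrange]
    exact isPrime_span_X_image _
  · rw [hrange, Function.comp_apply, X_mem_span_X_image_iff]
    exact huv i

/-- (0-based indexing.) The ideal `(y₁,...,y_k)` is a minimal prime of
`I = (y₁, f_{12}, ..., f_{k-1,k})`. -/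
theorem span_y_mem_minimalPrimes {K : Type*} [Field K] {n k : ℕ} (hk : 2 ≤ k) (hkn : k ≤ n) :
    Ideal.span {p : MvPolynomial (Fin n ⊕ Fin n) K | ∃ i : ℕ, ∃ h : i < k, p = yy ⟨i, by omega⟩}
      ∈ (Ideal.span ({yy (K := K) (n := n) ⟨0, by omega⟩} ∪
        {p | ∃ i : ℕ, ∃ h : i + 1 < k, p = fm ⟨i, by omega⟩ ⟨i + 1, by omega⟩})).minimalPrimes := by
  obtain ⟨m, rfl⟩ := Nat.exists_eq_add_of_le' (one_le_two.trans hk)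
  simpa only [range_eq_setOf_exists_lt, Nat.add_lt_add_iff_right] using!
    span_y_mem_minimalPrimes_general (R := K) (u := Sum.inl ∘ Fin.castLE hkn)
      (v := Sum.inr ∘ Fin.castLE hkn) (by simp)
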